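/- Every mixture over the two High strategies is a mixed Nash equilibrium of the four-strategy coalition-formation Prisoner's Dilemma game: for all real numbers p, q ∈ [0, 1], the mixed profile in which player 1 plays strategy 1 with probability p and strategy 3 with probability 1 − p (and strategies 0, 2 with probability 0), and player 2 plays strategy 1 with probability q and strategy 3 with probability 1 − q (and strategies 0, 2 with probability 0), is a mixed Nash equilibrium. -/

import Mathlib

/-- Payoff of player 1 in the four-strategy coalition-formation Prisoner's Dilemma:
strategies `0, 2` are Low, `1, 3` are High. -/
noncomputable def u1 (i j : Fin 4) : ℝ :=
  if i = 1 ∨ i = 3 then (if j = 1 ∨ j = 3 then -2 else 3)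
  else (if j = 1 ∨ j = 3 then -5 else 0)

/-- Payoff of player 2. -/
noncomputable def u2 (i j : Fin 4) : ℝ := u1 j i

section FiniteGame

variable {R ι κ : Type*} [Fintype ι]

theorem sum_mul_le_of_mem_stdSimplex [Semiring R] [PartialOrder R] [IsOrderedRing R]
    {τ v : ι → R} {m : R} (hτ : τ ∈ stdSimplex R ι) (hv : ∀ i, v i ≤ m) :
    ∑ i, τ i * v i ≤ m :=
  calc
    ∑ i, τ i * v i ≤ ∑ i, τ i * m :=
      Finset.sum_le_sum fun i _ => mul_le_mul_of_nonneg_left (hv i) (hτ.1 i)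
    _ = m := by rw [← Finset.sum_mul, hτ.2, one_mul]

theorem sum_mul_le_sum_mul_of_forall_support_max [Semiring R] [PartialOrder R] [IsOrderedRing R]
    {σ τ v : ι → R} (hσ : σ ∈ stdSimplex R ι) (hτ : τ ∈ stdSimplex R ι)
    (hmax : ∀ k, σ k ≠ 0 → ∀ i, v i ≤ v k) :
    ∑ i, τ i * v i ≤ ∑ k, σ k * v k :=
  calc
    ∑ i, τ i * v i = ∑ k, σ k * ∑ i, τ i * v i := by rw [← Finset.sum_mul, hσ.2, one_mul]
    _ ≤ ∑ k, σ k * v k := Finset.sum_le_sum fun k _ => by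
      rcases eq_or_ne (σ k) 0 with hk | hk
      · simp [hk]
      · exact mul_le_mul_of_nonneg_left (sum_mul_le_of_mem_stdSimplex hτ (hmax k hk)) (hσ.1 k)

/-- The pure strategy `a` is (weakly) dominant for a player with payoff `u`, whose own strategy is
the first argument of `u`: it is optimal against every pure strategy of the opponent. -/
def IsDominant [LE R] (u : ι → κ → R) (a : ι) : Prop :=
  ∀ i j, u i j ≤ u a j

variable [Fintype κ]

/-- The expected value of the payoff `u` when the players independently use the mixed strategies
`σ` and `ρ`, given as arbitrary weight functions. -/
def expectedPayoff [Semiring R] (u : ι → κ → R) (σ : ι → R) (ρ : κ → R) : R :=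
  ∑ i, ∑ j, σ i * ρ j * u i j

/-- The mixed strategy `σ` is a best response to `ρ` for a player with payoff `u`, whose own
strategy is the first argument of `u`: no mixed strategy has a larger expected payoff against
`ρ`. -/
def IsBestResponse [Semiring R] [PartialOrder R] (u : ι → κ → R) (σ : ι → R) (ρ : κ → R) : Prop :=
  ∀ τ ∈ stdSimplex R ι, expectedPayoff u τ ρ ≤ expectedPayoff u σ ρ

theorem expectedPayoff_eq_sum_mul [Semiring R] (u : ι → κ → R) (σ : ι → R) (ρ : κ → R) :
    expectedPayoff u σ ρ = ∑ i, σ i * ∑ j, ρ j * u i j := by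
  simp only [expectedPayoff, Finset.mul_sum, mul_assoc]

theorem expectedPayoff_flip [CommSemiring R] (u : ι → κ → R) (σ : ι → R) (ρ : κ → R) :
    expectedPayoff (flip u) ρ σ = expectedPayoff u σ ρ := by
  simp only [expectedPayoff, flip]
  rw [Finset.sum_comm]
  simp only [mul_comm (ρ _)]

theorem isBestResponse_of_forall_support_isDominant [Semiring R] [PartialOrder R]
    [IsOrderedRing R] {u : ι → κ → R} {σ : ι → R} {ρ : κ → R} (hσ : σ ∈ stdSimplex R ι)
    (hρ : 0 ≤ ρ) (hdom : ∀ k, σ k ≠ 0 → IsDominant u k) : IsBestResponse u σ ρ := by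
  intro τ hτ
  simp only [expectedPayoff_eq_sum_mul]
  refine sum_mul_le_sum_mul_of_forall_support_max hσ hτ fun k hk i => ?_
  exact Finset.sum_le_sum fun j _ => mul_le_mul_of_nonneg_left (hdom k hk i j) (hρ j)

end FiniteGame

/-- The mixed strategy that plays High in the separated structure (strategy `1`) with probability
`p` and High in the joint structure (strategy `3`) with probability `1 - p`. -/
def highMixture (p : ℝ) : Fin 4 → ℝ :=
  fun i => if i = 1 then p else if i = 3 then 1 - p else 0

theorem highMixture_mem_stdSimplex {p : ℝ} (hp : p ∈ Set.Icc (0 : ℝ) 1) :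
    highMixture p ∈ stdSimplex ℝ (Fin 4) := by
  refine ⟨fun i => ?_, by simp [Fin.sum_univ_four, highMixture]⟩
  unfold highMixture
  split_ifs
  exacts [hp.1, sub_nonneg.2 hp.2, le_rfl]

theorem high_of_highMixture_ne_zero {p : ℝ} {i : Fin 4} (hi : highMixture p i ≠ 0) :
    i = 1 ∨ i = 3 := by
  contrapose! hi
  simp [highMixture, hi]

theorem isDominant_u1_of_high {a : Fin 4} (ha : a = 1 ∨ a = 3) : IsDominant u1 a := by
  intro i j
  simp only [u1, if_pos ha]
  split_ifs <;> norm_num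

theorem isBestResponse_highMixture {p : ℝ} (hp : p ∈ Set.Icc (0 : ℝ) 1) {ρ : Fin 4 → ℝ}
    (hρ : 0 ≤ ρ) : IsBestResponse u1 (highMixture p) ρ :=
  isBestResponse_of_forall_support_isDominant (highMixture_mem_stdSimplex hp) hρ
    fun _ hk => isDominant_u1_of_high (high_of_highMixture_ne_zero hk)

theorem expectedPayoff_u2 (σ ρ : Fin 4 → ℝ) : expectedPayoff u2 σ ρ = expectedPayoff u1 ρ σ :=
  expectedPayoff_flip u1 ρ σ

/-- Every mixture over the two High strategies is a mixed Nash equilibrium of the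
four-strategy coalition-formation Prisoner's Dilemma game. -/
theorem stmt_11 (p q : ℝ) (hp : p ∈ Set.Icc (0 : ℝ) 1) (hq : q ∈ Set.Icc (0 : ℝ) 1)
    (σ1 σ2 : Fin 4 → ℝ)
    (hσ1 : σ1 = fun i => if i = 1 then p else if i = 3 then 1 - p else 0)
    (hσ2 : σ2 = fun j => if j = 1 then q else if j = 3 then 1 - q else 0) :
    (∀ τ : Fin 4 → ℝ, (∀ a, 0 ≤ τ a) → ∑ a, τ a = 1 →
      ∑ i : Fin 4, ∑ j : Fin 4, τ i * σ2 j * u1 i j ≤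
        ∑ i : Fin 4, ∑ j : Fin 4, σ1 i * σ2 j * u1 i j) ∧
    (∀ τ : Fin 4 → ℝ, (∀ a, 0 ≤ τ a) → ∑ a, τ a = 1 →
      ∑ i : Fin 4, ∑ j : Fin 4, σ1 i * τ j * u2 i j ≤
        ∑ i : Fin 4, ∑ j : Fin 4, σ1 i * σ2 j * u2 i j) := by
  obtain rfl : σ1 = highMixture p := hσ1
  obtain rfl : σ2 = highMixture q := hσ2
  have hp_nonneg : 0 ≤ highMixture p := (highMixture_mem_stdSimplex hp).1
  have hq_nonneg : 0 ≤ highMixture q := (highMixture_mem_stdSimplex hq).1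
  refine ⟨fun τ h_nonneg h_sum => ?_, fun τ h_nonneg h_sum => ?_⟩
  · exact isBestResponse_highMixture hp hq_nonneg τ ⟨h_nonneg, h_sum⟩
  · change expectedPayoff u2 (highMixture p) τ ≤ expectedPayoff u2 (highMixture p) (highMixture q)
    rw [expectedPayoff_u2, expectedPayoff_u2]
    exact isBestResponse_highMixture hq hp_nonneg τ ⟨h_nonneg, h_sum⟩
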